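/- For every solution of the reduced backward Ricci flow system of class U3S1, case (ii), the quantity C²A/(C+A) is conserved, C(t)²A(t)/(C(t)+A(t)) = λ₃²λ₁/(λ₃+λ₁) =: Λ for all t ∈ [0,T), and A(t)/2 − (√Λ/4)·arsinh(2A(t)/√Λ) = λ₁/2 − (√Λ/4)·arsinh(2λ₁/√Λ) − t for all t ∈ [0,T). -/

import Mathlib

open Real Set ENNReal

/-- The time domain `[0, T)` where `T ∈ (0, ∞]` is an extended nonnegative real. -/
def flowDomain (T : ℝ≥0∞) : Set ℝ := {t : ℝ | 0 ≤ t ∧ ENNReal.ofReal t < T}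

/-! Along the flow, `Λ = C²A/(C+A)` has zero derivative. Since `1 + 4A²/Λ = (1 + 2A/C)²`, the
function `a ↦ a/2 - (√Λ/4) arsinh (2a/√Λ)` has derivative `A/(C+2A)` at `a = A`, the reciprocal of
`-A'`. Composed with `A` it therefore decreases at unit speed. -/

lemma convex_flowDomain (T : ℝ≥0∞) : Convex ℝ (flowDomain T) :=
  (ordConnected_Ici.inter (ordConnected_Iio.preimage_mono ENNReal.ofReal_mono)).convex

lemma zero_mem_flowDomain {T : ℝ≥0∞} (hT : 0 < T) : (0 : ℝ) ∈ flowDomain T :=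
  ⟨le_rfl, by rwa [ENNReal.ofReal_zero]⟩

lemma eq_of_hasDerivWithinAt_zero {𝕜 E : Type*} [RCLike 𝕜] [NormedAddCommGroup E]
    [NormedSpace 𝕜 E] {f : 𝕜 → E} {s : Set 𝕜} (hs : Convex ℝ s)
    (hf : ∀ x ∈ s, HasDerivWithinAt f 0 s x) {x y : 𝕜} (hx : x ∈ s) (hy : y ∈ s) :
    f y = f x := by
  have h := hs.norm_image_sub_le_of_norm_hasDerivWithin_le hf (fun _ _ ↦ norm_zero.le) hx hy
  rwa [zero_mul, norm_le_zero_iff, sub_eq_zero] at h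

/-- The conserved quantity `Λ` of the flow, in terms of the values `a` of `A` and `c` of `C`. -/
noncomputable def flowInvariant (a c : ℝ) : ℝ := c ^ 2 * a / (c + a)

/-- The primitive, vanishing at `a = 0`, of `1 / |A'|` as a function of the value `a` of `A` when
`flowInvariant` has the value `Λ > 0`. It measures the time the flow takes between two values
of `A`. -/
noncomputable def flowClock (Λ a : ℝ) : ℝ := a / 2 - √Λ / 4 * arsinh (2 * a / √Λ)

/-- The functions `A` and `C` are positive and solve the reduced backward Ricci flow system of
class `U3S1`, case (ii), on the set of times `s`. Derivatives are taken within `s`, so that they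
are one-sided at the endpoints of an interval. -/
structure IsReducedFlowOn (A C : ℝ → ℝ) (s : Set ℝ) : Prop where
  pos : ∀ t ∈ s, 0 < A t ∧ 0 < C t
  hasDerivWithinAt_fst : ∀ t ∈ s, HasDerivWithinAt A (-(C t / A t) - 2) s t
  hasDerivWithinAt_snd : ∀ t ∈ s, HasDerivWithinAt C (C t ^ 2 / A t ^ 2) s t

lemma flowInvariant_pos {a c : ℝ} (ha : 0 < a) (hc : 0 < c) : 0 < flowInvariant a c := by
  unfold flowInvariant
  positivity

lemma sqrt_one_add_sq_div_sqrt_flowInvariant {a c : ℝ} (ha : 0 < a) (hc : 0 < c) :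
    √(1 + (2 * a / √(flowInvariant a c)) ^ 2) = 1 + 2 * a / c := by
  rw [sqrt_eq_iff_eq_sq (by positivity) (by positivity), div_pow,
    sq_sqrt (flowInvariant_pos ha hc).le, flowInvariant]
  field_simp
  ring

lemma hasDerivAt_flowClock {Λ : ℝ} (hΛ : 0 < Λ) (a : ℝ) :
    HasDerivAt (flowClock Λ) ((1 - (√(1 + (2 * a / √Λ) ^ 2))⁻¹) / 2) a := by
  have h_arg : HasDerivAt (fun x ↦ 2 * x / √Λ) (2 * 1 / √Λ) a :=
    ((hasDerivAt_id a).const_mul 2).div_const _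
  refine (((hasDerivAt_id a).div_const 2).sub (h_arg.arsinh.const_mul (√Λ / 4))).congr_deriv ?_
  have hsqrt : √Λ ≠ 0 := (sqrt_pos.2 hΛ).ne'
  simp only [smul_eq_mul]
  field_simp
  ring

lemma hasDerivAt_flowClock_flowInvariant {a c : ℝ} (ha : 0 < a) (hc : 0 < c) :
    HasDerivAt (flowClock (flowInvariant a c)) (a / (c + 2 * a)) a := by
  refine (hasDerivAt_flowClock (flowInvariant_pos ha hc) a).congr_deriv ?_
  rw [sqrt_one_add_sq_div_sqrt_flowInvariant ha hc]
  field_simp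
  ring

namespace IsReducedFlowOn

variable {A C : ℝ → ℝ} {s : Set ℝ} {t₀ t : ℝ}

lemma hasDerivWithinAt_flowInvariant (h : IsReducedFlowOn A C s) (ht : t ∈ s) :
    HasDerivWithinAt (fun r ↦ flowInvariant (A r) (C r)) 0 s t := by
  obtain ⟨hA_pos, hC_pos⟩ := h.pos t ht
  have hA := h.hasDerivWithinAt_fst t ht
  have hC := h.hasDerivWithinAt_snd t ht
  refine (((hC.pow 2).mul hA).div (hC.add hA) (add_pos hC_pos hA_pos).ne').congr_deriv ?_
  simp only [Pi.mul_apply, Pi.pow_apply, Pi.add_apply]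
  field_simp
  push_cast
  ring

lemma flowInvariant_eq (h : IsReducedFlowOn A C s) (hs : Convex ℝ s) (ht₀ : t₀ ∈ s) (ht : t ∈ s) :
    flowInvariant (A t) (C t) = flowInvariant (A t₀) (C t₀) :=
  eq_of_hasDerivWithinAt_zero hs (fun _ ↦ h.hasDerivWithinAt_flowInvariant) ht₀ ht

lemma hasDerivWithinAt_flowClock (h : IsReducedFlowOn A C s) (ht : t ∈ s) :
    HasDerivWithinAt (fun r ↦ flowClock (flowInvariant (A t) (C t)) (A r)) (-1) s t := by
  obtain ⟨hA_pos, hC_pos⟩ := h.pos t ht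
  refine ((hasDerivAt_flowClock_flowInvariant hA_pos hC_pos).comp_hasDerivWithinAt t
    (h.hasDerivWithinAt_fst t ht)).congr_deriv ?_
  field_simp
  ring

lemma flowClock_eq (h : IsReducedFlowOn A C s) (hs : Convex ℝ s) (ht₀ : t₀ ∈ s) (ht : t ∈ s) :
    flowClock (flowInvariant (A t₀) (C t₀)) (A t) =
      flowClock (flowInvariant (A t₀) (C t₀)) (A t₀) - (t - t₀) := by
  have h_deriv : ∀ r ∈ s, HasDerivWithinAt
      (fun r ↦ flowClock (flowInvariant (A t₀) (C t₀)) (A r) + r) 0 s r := fun r hr ↦ by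
    rw [← h.flowInvariant_eq hs ht₀ hr, ← neg_add_cancel (1 : ℝ)]
    exact (h.hasDerivWithinAt_flowClock hr).add (hasDerivWithinAt_id r s)
  have h_const := eq_of_hasDerivWithinAt_zero hs h_deriv ht₀ ht
  linarith

end IsReducedFlowOn

theorem stmt15_general {A C : ℝ → ℝ} {s : Set ℝ} (h : IsReducedFlowOn A C s) (hs : Convex ℝ s)
    {t₀ t : ℝ} (ht₀ : t₀ ∈ s) (ht : t ∈ s) :
    flowInvariant (A t) (C t) = flowInvariant (A t₀) (C t₀) ∧
      flowClock (flowInvariant (A t₀) (C t₀)) (A t) =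
        flowClock (flowInvariant (A t₀) (C t₀)) (A t₀) - (t - t₀) :=
  ⟨h.flowInvariant_eq hs ht₀ ht, h.flowClock_eq hs ht₀ ht⟩

/-- For every solution of the reduced backward Ricci flow system of class `U3S1`,
case (ii), the quantity `C²A/(C+A)` is conserved, equal to `Λ = λ₃²λ₁/(λ₃+λ₁)`, and
`A/2 − (√Λ/4)·arsinh(2A/√Λ) = λ₁/2 − (√Λ/4)·arsinh(2λ₁/√Λ) − t` on `[0,T)`. -/
theorem stmt15 (T : ℝ≥0∞) (hT : 0 < T)
    (lam1 lam3 : ℝ) (hlam1 : 0 < lam1) (hlam3 : 0 < lam3)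
    (A C : ℝ → ℝ)
    (hpos : ∀ t ∈ flowDomain T, 0 < A t ∧ 0 < C t)
    (hA : ∀ t ∈ flowDomain T,
      HasDerivWithinAt A (-(C t / A t) - 2) (flowDomain T) t)
    (hC : ∀ t ∈ flowDomain T,
      HasDerivWithinAt C (C t ^ 2 / A t ^ 2) (flowDomain T) t)
    (hA0 : A 0 = lam1) (hC0 : C 0 = lam3) :
    ∀ t ∈ flowDomain T,
      C t ^ 2 * A t / (C t + A t) = lam3 ^ 2 * lam1 / (lam3 + lam1) ∧
      A t / 2 - Real.sqrt (lam3 ^ 2 * lam1 / (lam3 + lam1)) / 4 *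
          Real.arsinh (2 * A t / Real.sqrt (lam3 ^ 2 * lam1 / (lam3 + lam1))) =
        lam1 / 2 - Real.sqrt (lam3 ^ 2 * lam1 / (lam3 + lam1)) / 4 *
          Real.arsinh (2 * lam1 / Real.sqrt (lam3 ^ 2 * lam1 / (lam3 + lam1))) - t := by
  subst hA0 hC0
  intro t ht
  simpa only [flowInvariant, flowClock, sub_zero] using
    stmt15_general ⟨hpos, hA, hC⟩ (convex_flowDomain T) (zero_mem_flowDomain hT) ht
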